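/- Let n ≥ 2, let q : ℝ^n_+ → ℝ satisfy the cost-function conditions, let c ∈ ℝ^n_+, set α = c_1 + ⋯ + c_n, and let h ∈ L^1_α(ℝ^1_+). Then the operator R^h_q is injective on L^∞_{I−c}(ℝ^n_+) (i.e., if f ∈ L^∞_{I−c}(ℝ^n_+) and (R^h_q f)(p) = 0 for all p ∈ ℝ^n_+, then f = 0 a.e.) if and only if (M e^{−q})(c + iξ) ≠ 0 for every ξ ∈ ℝ^n and (Mh)(α + iτ) ≠ 0 for every τ ∈ ℝ. -/

import Mathlib

open MeasureTheory Complex Set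

noncomputable section

/-- The positive orthant `ℝ^n_+`. -/
def posOrth (n : ℕ) : Set (Fin n → ℝ) := {x | ∀ i, 0 < x i}

/-- `q` satisfies the cost-function conditions: `C¹` on `ℝ^n_+`, positive,
positively homogeneous of degree one, with bounded level sets. -/
def IsCostFun (n : ℕ) (q : (Fin n → ℝ) → ℝ) : Prop :=
  ContDiffOn ℝ 1 q (posOrth n) ∧
  (∀ x ∈ posOrth n, 0 < q x) ∧
  (∀ lam : ℝ, 0 < lam → ∀ x ∈ posOrth n, q (fun i => lam * x i) = lam * q x) ∧
  (∀ t : ℝ, Bornology.IsBounded {x | x ∈ posOrth n ∧ q x = t})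

/-- The `n`-dimensional Mellin transform `(Mg)(z) = ∫_{ℝ^n_+} x^{z-I} g(x) dx`. -/
def mellinT (n : ℕ) (g : (Fin n → ℝ) → ℝ) (z : Fin n → ℂ) : ℂ :=
  ∫ x in posOrth n, (∏ i, (x i : ℂ) ^ (z i - 1)) * g x

/-- Membership in `L^∞_c(ℝ^n_+)`: measurable with `ess sup |f(x) x^c| < ∞`. -/
def MemLinfw (n : ℕ) (c : Fin n → ℝ) (f : (Fin n → ℝ) → ℝ) : Prop :=
  AEStronglyMeasurable f (volume.restrict (posOrth n)) ∧
  ∃ K : ℝ, ∀ᵐ x ∂(volume.restrict (posOrth n)), |f x * ∏ i, x i ^ c i| ≤ K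

/-- Membership in `L¹_α(ℝ¹_+)`: measurable with `∫_0^∞ |h(t)| t^{α-1} dt < ∞`. -/
def MemL1w1 (α : ℝ) (h : ℝ → ℝ) : Prop :=
  IntegrableOn (fun t => h t * t ^ (α - 1)) (Ioi (0 : ℝ))

/-- The operator `(R^h_q f)(p) = ∫_{ℝ^n_+} h(q(p₁x₁,…,pₙxₙ)) f(x) dx`. -/
def Rhq (n : ℕ) (q : (Fin n → ℝ) → ℝ) (h : ℝ → ℝ) (f : (Fin n → ℝ) → ℝ)
    (p : Fin n → ℝ) : ℝ :=
  ∫ x in posOrth n, h (q (fun i => p i * x i)) * f x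

/-!
In logarithmic coordinates `x = e^u`, `p = e^{-v}` the operator `R^h_q` becomes, up to an
exponential factor, the cross-correlation of the bounded function `e^{(1-c)·u} f(e^u)` with the
integrable kernel `K(u) = e^{c·u} h(q(e^u))`, whose Fourier transform is `M(h ∘ q)` on the plane
`Re z = c`.

If that transform has no zeros, Wiener's theorem gives `f = 0`. Suppose `∫ K ≠ 0` and `φ` has
spectrum so close to `0` that `w * φ = φ` for a kernel `w` that is nearly invariant, in `L¹`, under
the translations weighted by `K`. Then `w * K` is close to `(∫ K) w`, and since `F = crossCorr f φ`
is reproduced by `w` and annihilated by `K`, this forces `sup ‖F‖` to be at most a fixed fraction of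
itself, so `F = 0`. Modulation moves this to any frequency, a partition of unity extends it to every
compact spectrum, and an approximate identity with compact spectrum then kills `f`.
Conversely, a zero of `M(h ∘ q)` at `z = c + iξ` puts the real part of `x^{z-1}` in the kernel of
`R^h_q`.

Finally `M(h ∘ q)(z) Γ(∑ zᵢ) = M(e^{-q})(z) (Mh)(∑ zᵢ)`: both sides are integrals over `ℝ^n × ℝ`,
exchanged by the measure-preserving involution that trades the level `log q(e^u)` with the extra
real variable. As `Γ` has no zeros, `M(h ∘ q)` vanishes exactly where one of the factors on the
right does.
-/

open Filter Topology
open scoped FourierTransform RealInnerProductSpace ContDiff Convolution SchwartzMap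

section CrossCorrelation

variable {G : Type*} [AddCommGroup G] [MeasurableSpace G] {μ : Measure G} {f g h K : G → ℂ}
  {C : ℝ} {x : G}

/-- The cross-correlation `x ↦ ∫ f (x + y) g (y) dy`, i.e. the convolution of `f` with the
reflection of `g`; pairing all translates of a bounded `f` with an integrable `g` is the additive
form of the operator `R^h_q`. -/
def crossCorr (μ : Measure G) (f g : G → ℂ) (x : G) : ℂ :=
  ∫ y, f (x + y) * g y ∂μ

/-- The `L¹` modulus of continuity of `g`: the `L¹` distance from `g` to its translate by `y`. -/
def translationModulus (μ : Measure G) (g : G → ℂ) (y : G) : ℝ :=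
  ∫ z, ‖g z - g (z - y)‖ ∂μ

lemma translationModulus_nonneg (y : G) : 0 ≤ translationModulus μ g y :=
  integral_nonneg fun _ => norm_nonneg _

lemma translationModulus_zero : translationModulus μ g 0 = 0 := by
  simp [translationModulus]

lemma crossCorr_smul_right (a : ℂ) : crossCorr μ f (a • g) x = a * crossCorr μ f g x := by
  simp only [crossCorr, Pi.smul_apply, smul_eq_mul, mul_left_comm, integral_const_mul]

lemma crossCorr_mul_of_map_add_eq_mul {e : G → ℂ} (he : ∀ x y, e (x + y) = e x * e y) :
    crossCorr μ (e * f) g x = e x * crossCorr μ f (e * g) x := by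
  simp only [crossCorr, Pi.mul_apply, he, ← integral_const_mul]
  congr 1 with y
  ring

section Translation

variable [MeasurableAdd G] [μ.IsAddLeftInvariant]

lemma ae_norm_add_left_le (hC : ∀ᵐ z ∂μ, ‖f z‖ ≤ C) (x : G) : ∀ᵐ y ∂μ, ‖f (x + y)‖ ≤ C :=
  (measurePreserving_add_left μ x).quasiMeasurePreserving.ae hC

lemma integrable_crossCorr_integrand (hf : AEStronglyMeasurable f μ)
    (hC : ∀ᵐ z ∂μ, ‖f z‖ ≤ C) (hg : Integrable g μ) (x : G) :
    Integrable (fun y => f (x + y) * g y) μ :=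
  hg.bdd_mul (hf.comp_measurePreserving (measurePreserving_add_left μ x))
    (ae_norm_add_left_le hC x)

lemma crossCorr_sub_right (hf : AEStronglyMeasurable f μ) (hC : ∀ᵐ z ∂μ, ‖f z‖ ≤ C)
    (hg : Integrable g μ) (hh : Integrable h μ) :
    crossCorr μ f (g - h) x = crossCorr μ f g x - crossCorr μ f h x := by
  simp only [crossCorr, Pi.sub_apply, mul_sub]
  exact integral_sub (integrable_crossCorr_integrand hf hC hg x)
    (integrable_crossCorr_integrand hf hC hh x)

lemma crossCorr_finsetSum_right {ι : Type*} (s : Finset ι) {φ : ι → G → ℂ}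
    (hf : AEStronglyMeasurable f μ) (hC : ∀ᵐ z ∂μ, ‖f z‖ ≤ C) (hφ : ∀ i ∈ s, Integrable (φ i) μ) :
    crossCorr μ f (∑ i ∈ s, φ i) x = ∑ i ∈ s, crossCorr μ f (φ i) x := by
  simp only [crossCorr, Finset.sum_apply, Finset.mul_sum]
  exact integral_finsetSum s fun i hi => integrable_crossCorr_integrand hf hC (hφ i hi) x

lemma norm_crossCorr_le (hC : ∀ᵐ z ∂μ, ‖f z‖ ≤ C) (hg : Integrable g μ) :
    ‖crossCorr μ f g x‖ ≤ C * ∫ y, ‖g y‖ ∂μ := by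
  rw [← integral_const_mul]
  refine norm_integral_le_of_norm_le (hg.norm.const_mul C) ?_
  filter_upwards [ae_norm_add_left_le hC x] with y hy
  rw [norm_mul]
  gcongr

lemma translationModulus_le (hg : Integrable g μ) (y : G) :
    translationModulus μ g y ≤ 2 * ∫ z, ‖g z‖ ∂μ :=
  have hgy : Integrable (fun z => g (z - y)) μ := hg.comp_sub_right y
  calc translationModulus μ g y ≤ ∫ z, (‖g z‖ + ‖g (z - y)‖) ∂μ :=
        integral_mono (hg.sub hgy).norm (hg.norm.add hgy.norm) fun z => norm_sub_le _ _
    _ = 2 * ∫ z, ‖g z‖ ∂μ := by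
        rw [integral_add hg.norm hgy.norm, integral_sub_right_eq_self (fun z => ‖g z‖), two_mul]

end Translation

section Product

variable [MeasurableAdd₂ G] [SFinite μ] [μ.IsAddLeftInvariant]

lemma aestronglyMeasurable_crossCorr (hf : AEStronglyMeasurable f μ)
    (hg : AEStronglyMeasurable g μ) : AEStronglyMeasurable (crossCorr μ f g) μ :=
  ((hf.comp_quasiMeasurePreserving (quasiMeasurePreserving_add μ μ)).mul
    hg.comp_snd).integral_prod_right'

variable [MeasurableNeg G]

lemma crossCorr_crossCorr (hf : AEStronglyMeasurable f μ) (hC : ∀ᵐ z ∂μ, ‖f z‖ ≤ C)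
    (hg : Integrable g μ) (hh : Integrable h μ) :
    crossCorr μ (crossCorr μ f g) h x =
      crossCorr μ f (h ⋆[ContinuousLinearMap.mul ℂ ℂ, μ] g) x := by
  have hint : Integrable (fun p : G × G => f (x + p.1) * (h p.2 * g (p.1 - p.2))) (μ.prod μ) :=
    (hh.convolution_integrand (ContinuousLinearMap.mul ℂ ℂ) hg).bdd_mul
      (hf.comp_measurePreserving (measurePreserving_add_left μ x)).comp_fst
      (Measure.quasiMeasurePreserving_fst.ae (ae_norm_add_left_le hC x))
  calc crossCorr μ (crossCorr μ f g) h x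
      = ∫ y, ∫ u, f (x + u) * (h y * g (u - y)) ∂μ ∂μ := by
        refine integral_congr_ae (.of_forall fun y => ?_)
        simp only [crossCorr, ← integral_mul_const]
        rw [← integral_sub_right_eq_self _ y]
        congr 1 with u
        rw [add_add_sub_cancel]
        ring
    _ = ∫ u, ∫ y, f (x + u) * (h y * g (u - y)) ∂μ ∂μ := (integral_integral_swap hint).symm
    _ = crossCorr μ f (h ⋆[ContinuousLinearMap.mul ℂ ℂ, μ] g) x := by
        simp only [integral_const_mul, crossCorr, convolution_def, ContinuousLinearMap.mul_apply']

lemma integral_norm_integral_smul_sub_convolution_le (hK : Integrable K μ) (hg : Integrable g μ) :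
    ∫ z, ‖((∫ y, K y ∂μ) • g - K ⋆[ContinuousLinearMap.mul ℂ ℂ, μ] g) z‖ ∂μ ≤
      ∫ y, ‖K y‖ * translationModulus μ g y ∂μ := by
  have hconv : Integrable (fun p : G × G => K p.2 * g (p.1 - p.2)) (μ.prod μ) :=
    hK.convolution_integrand (ContinuousLinearMap.mul ℂ ℂ) hg
  have hint : Integrable (fun p : G × G => K p.2 * (g p.1 - g (p.1 - p.2))) (μ.prod μ) := by
    simp only [mul_sub]
    exact ((hK.mul_prod hg).swap).sub hconv
  have hdiff : ∀ᵐ z ∂μ, ((∫ y, K y ∂μ) • g - K ⋆[ContinuousLinearMap.mul ℂ ℂ, μ] g) z =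
      ∫ y, K y * (g z - g (z - y)) ∂μ := by
    filter_upwards [hconv.prod_right_ae] with z hz
    simp only [mul_sub, integral_sub (hK.mul_const _) hz, integral_mul_const]
    rfl
  calc ∫ z, ‖((∫ y, K y ∂μ) • g - K ⋆[ContinuousLinearMap.mul ℂ ℂ, μ] g) z‖ ∂μ
      = ∫ z, ‖∫ y, K y * (g z - g (z - y)) ∂μ‖ ∂μ :=
        integral_congr_ae (hdiff.mono fun z hz => congrArg norm hz)
    _ ≤ ∫ z, ∫ y, ‖K y * (g z - g (z - y))‖ ∂μ ∂μ :=
        integral_mono hint.integral_prod_left.norm hint.norm.integral_prod_left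
          fun z => norm_integral_le_integral_norm _
    _ = ∫ y, ∫ z, ‖K y * (g z - g (z - y))‖ ∂μ ∂μ := integral_integral_swap hint.norm
    _ = ∫ y, ‖K y‖ * translationModulus μ g y ∂μ := by
        simp only [norm_mul, integral_const_mul, translationModulus]

variable [μ.IsNegInvariant]

lemma crossCorr_convolution_eq_zero (hf : AEStronglyMeasurable f μ) (hC : ∀ᵐ z ∂μ, ‖f z‖ ≤ C)
    (hK : Integrable K μ) (hg : Integrable g μ) (hfK : crossCorr μ f K = 0) :
    crossCorr μ f (K ⋆[ContinuousLinearMap.mul ℂ ℂ, μ] g) x = 0 := by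
  rw [← convolution_flip, ContinuousLinearMap.flip_mul, ← crossCorr_crossCorr hf hC hK hg, hfK]
  simp [crossCorr]

lemma crossCorr_crossCorr_eq_zero (hf : AEStronglyMeasurable f μ) (hC : ∀ᵐ z ∂μ, ‖f z‖ ≤ C)
    (hK : Integrable K μ) (hg : Integrable g μ) (hfK : crossCorr μ f K = 0) :
    crossCorr μ (crossCorr μ f g) K = 0 := by
  ext x
  rw [crossCorr_crossCorr hf hC hg hK, crossCorr_convolution_eq_zero hf hC hK hg hfK,
    Pi.zero_apply]

lemma norm_integral_mul_norm_crossCorr_le (hf : AEStronglyMeasurable f μ)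
    (hC : ∀ᵐ z ∂μ, ‖f z‖ ≤ C) (hC₀ : 0 ≤ C) (hK : Integrable K μ) (hg : Integrable g μ)
    (hfK : crossCorr μ f K = 0) :
    ‖∫ y, K y ∂μ‖ * ‖crossCorr μ f g x‖ ≤ C * ∫ y, ‖K y‖ * translationModulus μ g y ∂μ := by
  have hconv := hK.integrable_convolution (ContinuousLinearMap.mul ℂ ℂ) hg
  have hsub : (∫ y, K y ∂μ) * crossCorr μ f g x =
      crossCorr μ f ((∫ y, K y ∂μ) • g - K ⋆[ContinuousLinearMap.mul ℂ ℂ, μ] g) x := by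
    rw [crossCorr_sub_right hf hC (hg.smul _) hconv, crossCorr_smul_right,
      crossCorr_convolution_eq_zero hf hC hK hg hfK, sub_zero]
  rw [← norm_mul, hsub]
  exact (norm_crossCorr_le hC ((hg.smul _).sub hconv)).trans <|
    mul_le_mul_of_nonneg_left (integral_norm_integral_smul_sub_convolution_le hK hg) hC₀

/- `F := crossCorr μ f φ` satisfies `crossCorr μ F w = F` and is annihilated by `K`, so the previous
estimate gives `‖∫ K‖ * sup ‖F‖ ≤ (∫ ‖K‖ * translationModulus μ w) * sup ‖F‖`. -/
lemma crossCorr_eq_zero_of_convolution_eq_self {φ w : G → ℂ} (hf : AEStronglyMeasurable f μ)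
    (hC : ∀ᵐ z ∂μ, ‖f z‖ ≤ C) (hK : Integrable K μ) (hw : Integrable w μ) (hφ : Integrable φ μ)
    (hfK : crossCorr μ f K = 0) (hwφ : w ⋆[ContinuousLinearMap.mul ℂ ℂ, μ] φ = φ)
    (hsmall : ∫ y, ‖K y‖ * translationModulus μ w y ∂μ < ‖∫ y, K y ∂μ‖) :
    crossCorr μ f φ = 0 := by
  set F := crossCorr μ f φ with hF
  set S := ⨆ x, ‖F x‖ with hS
  have hFS : ∀ x, ‖F x‖ ≤ S :=
    le_ciSup ⟨C * ∫ y, ‖φ y‖ ∂μ, forall_mem_range.2 fun x => norm_crossCorr_le hC hφ⟩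
  have hS₀ : 0 ≤ S := Real.iSup_nonneg fun x => norm_nonneg _
  have hFw : crossCorr μ F w = F := by
    ext x
    rw [hF, crossCorr_crossCorr hf hC hφ hw, hwφ]
  have hbound : ∀ x, ‖∫ y, K y ∂μ‖ * ‖F x‖ ≤ S * ∫ y, ‖K y‖ * translationModulus μ w y ∂μ := by
    intro x
    rw [← congrFun hFw x]
    exact norm_integral_mul_norm_crossCorr_le (aestronglyMeasurable_crossCorr hf hφ.1)
      (.of_forall hFS) hS₀ hK hw (crossCorr_crossCorr_eq_zero hf hC hK hφ hfK)
  have hSle : ‖∫ y, K y ∂μ‖ * S ≤ S * ∫ y, ‖K y‖ * translationModulus μ w y ∂μ := by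
    rw [hS, Real.mul_iSup_of_nonneg (norm_nonneg _)]
    exact ciSup_le hbound
  have hS_zero : S = 0 := by nlinarith
  ext x
  exact norm_le_zero_iff.1 ((hFS x).trans_eq hS_zero)

end Product

section Topology

variable [TopologicalSpace G] [IsTopologicalAddGroup G] [BorelSpace G] [SecondCountableTopology G]
  [IsLocallyFiniteMeasure μ] [μ.IsAddLeftInvariant]

lemma translationModulus_eq_norm_toL1_sub (hg : Integrable g μ) (y : G) :
    translationModulus μ g y = ‖hg.toL1 g - (DomAddAct.mk (-y) +ᵥ hg.toL1 g)‖ := by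
  rw [L1.norm_eq_integral_norm]
  have htranslate : ∀ᵐ z ∂μ, (hg.toL1 g) (-y + z) = g (-y + z) :=
    (measurePreserving_add_left μ (-y)).quasiMeasurePreserving.ae hg.coeFn_toL1
  have hvadd : (DomAddAct.mk (-y) +ᵥ hg.toL1 g : Lp ℂ 1 μ) =ᵐ[μ] fun z => hg.toL1 g (-y + z) :=
    Lp.coeFn_compMeasurePreserving _ _
  refine integral_congr_ae ?_
  filter_upwards [hg.coeFn_toL1, hvadd, htranslate,
    Lp.coeFn_sub (hg.toL1 g) (DomAddAct.mk (-y) +ᵥ hg.toL1 g)] with z h₁ h₂ h₃ h₄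
  rw [h₄, Pi.sub_apply, h₁, h₂, h₃, neg_add_eq_sub]

lemma continuous_translationModulus [μ.InnerRegularCompactLTTop] (hg : Integrable g μ) :
    Continuous (translationModulus μ g) := by
  rw [funext (translationModulus_eq_norm_toL1_sub hg)]
  have : Fact ((1 : ENNReal) ≠ ⊤) := ⟨ENNReal.one_ne_top⟩
  have hneg : Continuous fun y : G => DomAddAct.mk (-y) :=
    DomAddAct.continuous_mk.comp continuous_neg
  exact (continuous_const.sub (hneg.vadd continuous_const)).norm

end Topology

end CrossCorrelation

section Dilation

variable {E : Type*} [NormedAddCommGroup E] [NormedSpace ℝ E] [FiniteDimensional ℝ E]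
  [MeasurableSpace E] [BorelSpace E] {μ : Measure E} [μ.IsAddHaarMeasure] {g w K : E → ℂ} {ε : ℝ}

/-- The dilation `w_ε (y) = ε ^ d * w (ε y)`, `d = dim E`, normalised to preserve the integral
when `0 < ε`. -/
def l1Dilate (ε : ℝ) (w : E → ℂ) (y : E) : ℂ :=
  (ε ^ Module.finrank ℝ E : ℝ) • w (ε • y)

lemma integral_pow_finrank_smul_comp_smul {F : Type*} [NormedAddCommGroup F] [NormedSpace ℝ F]
    (hε : 0 < ε) (φ : E → F) :
    ∫ y, (ε ^ Module.finrank ℝ E : ℝ) • φ (ε • y) ∂μ = ∫ y, φ y ∂μ := by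
  rw [integral_smul, Measure.integral_comp_smul, abs_of_pos (by positivity), smul_smul,
    mul_inv_cancel₀ (by positivity), one_smul]

lemma integral_l1Dilate (hε : 0 < ε) : ∫ y, l1Dilate ε w y ∂μ = ∫ y, w y ∂μ :=
  integral_pow_finrank_smul_comp_smul hε w

lemma integrable_l1Dilate (hε : 0 < ε) (hw : Integrable w μ) : Integrable (l1Dilate ε w) μ :=
  (hw.comp_smul hε.ne').smul (ε ^ Module.finrank ℝ E : ℝ)

lemma translationModulus_l1Dilate (hε : 0 < ε) (y : E) :
    translationModulus μ (l1Dilate ε w) y = translationModulus μ w (ε • y) := by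
  rw [translationModulus, translationModulus,
    ← integral_pow_finrank_smul_comp_smul hε fun z => ‖w z - w (z - ε • y)‖]
  congr 1 with z
  rw [l1Dilate, l1Dilate, ← smul_sub, norm_smul, Real.norm_of_nonneg (by positivity), smul_eq_mul,
    smul_sub]

lemma integral_norm_l1Dilate_mul (hε : 0 < ε) (m : E → ℝ) :
    ∫ y, ‖l1Dilate ε w y‖ * m y ∂μ = ∫ y, ‖w y‖ * m (ε⁻¹ • y) ∂μ := by
  rw [← integral_pow_finrank_smul_comp_smul hε fun y => ‖w y‖ * m (ε⁻¹ • y)]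
  congr 1 with z
  rw [l1Dilate, norm_smul, Real.norm_of_nonneg (by positivity), smul_eq_mul,
    inv_smul_smul₀ hε.ne', mul_assoc]

lemma tendsto_integral_norm_mul_translationModulus (hK : Integrable K μ) (hg : Integrable g μ) :
    Tendsto (fun ε : ℝ => ∫ y, ‖K y‖ * translationModulus μ g (ε • y) ∂μ) (𝓝 0) (𝓝 0) := by
  have hcont := continuous_translationModulus hg
  rw [← integral_zero E ℝ (μ := μ)]
  refine tendsto_integral_filter_of_dominated_convergence (fun y => ‖K y‖ * (2 * ∫ z, ‖g z‖ ∂μ))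
    (.of_forall fun ε => hK.1.norm.mul (hcont.comp (continuous_const_smul ε)).aestronglyMeasurable)
    (.of_forall fun ε => .of_forall fun y => ?_) (hK.norm.mul_const _) (.of_forall fun y => ?_)
  · rw [norm_mul, norm_norm, Real.norm_of_nonneg (translationModulus_nonneg _)]
    gcongr
    exact translationModulus_le hg _
  · have hlim : Continuous fun ε : ℝ => ‖K y‖ * translationModulus μ g (ε • y) := by fun_prop
    simpa [translationModulus_zero] using hlim.tendsto 0

end Dilation

section Wiener

variable {V : Type*} [NormedAddCommGroup V] [InnerProductSpace ℝ V]

/-- The unitary character `y ↦ exp (2πi ⟪y, η⟫)` of frequency `η`. -/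
def unitaryChar (η y : V) : ℂ := Real.fourierChar ⟪y, η⟫

lemma unitaryChar_add (η x y : V) : unitaryChar η (x + y) = unitaryChar η x * unitaryChar η y := by
  simp only [unitaryChar, inner_add_left, AddChar.map_add_eq_mul, Circle.coe_mul]

lemma norm_unitaryChar (η y : V) : ‖unitaryChar η y‖ = 1 := Circle.norm_coe _

lemma unitaryChar_mul_unitaryChar_neg (η : V) : unitaryChar η * unitaryChar (-η) = 1 := by
  ext y
  simp [unitaryChar, ← Circle.coe_mul, ← AddChar.map_add_eq_mul]

lemma continuous_unitaryChar (η : V) : Continuous (unitaryChar η) :=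
  continuous_subtype_val.comp (Real.continuous_fourierChar.comp (by fun_prop))

variable [FiniteDimensional ℝ V]

lemma exists_finset_sum_schwartzMap_support_subset_ball {ψ : V → ℂ} (hψ : ContDiff ℝ ∞ ψ)
    (hsupp : HasCompactSupport ψ) {r : V → ℝ} (hr : ∀ η, 0 < r η) :
    ∃ (s : Finset V) (P : V → 𝓢(V, ℂ)), hsupp.toSchwartzMap hψ = ∑ i ∈ s, P i ∧
      ∀ i, Function.support (P i) ⊆ Metric.ball i (r i) := by
  obtain ⟨ρ, hρ⟩ := SmoothPartitionOfUnity.exists_isSubordinate (modelWithCornersSelf ℝ V)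
    (isClosed_tsupport ψ) (fun η : V => Metric.ball η (r η)) (fun η => Metric.isOpen_ball)
    (fun x _ => mem_iUnion.2 ⟨x, Metric.mem_ball_self (hr x)⟩)
  have hfin : {i | (Function.support (ρ i) ∩ tsupport ψ).Nonempty}.Finite :=
    ρ.locallyFinite.finite_nonempty_inter_compact hsupp
  have hsmooth (i : V) : ContDiff ℝ ∞ fun ξ => (ρ i ξ : ℂ) * ψ ξ :=
    (Complex.ofRealCLM.contDiff.comp (ρ i).contMDiff.contDiff).mul hψ
  have hcompact (i : V) : HasCompactSupport fun ξ => (ρ i ξ : ℂ) * ψ ξ := hsupp.mul_left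
  refine ⟨hfin.toFinset, fun i => (hcompact i).toSchwartzMap (hsmooth i), ?_, fun i ξ hξ => ?_⟩
  · ext ξ
    rw [sum_apply]
    change ψ ξ = ∑ i ∈ hfin.toFinset, (ρ i ξ : ℂ) * ψ ξ
    by_cases hξ : ψ ξ = 0
    · simp only [hξ, mul_zero, Finset.sum_const_zero]
    have hmem : ξ ∈ tsupport ψ := subset_tsupport _ hξ
    have hsum : ∑ i ∈ hfin.toFinset, ρ i ξ = 1 := by
      rw [← ρ.sum_eq_one hmem, finsum_eq_sum_of_support_subset]
      exact fun i hi => hfin.mem_toFinset.2 ⟨ξ, hi, hmem⟩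
    rw [← Finset.sum_mul, ← Complex.ofReal_sum, hsum, Complex.ofReal_one, one_mul]
  · have hρξ : ρ i ξ ≠ 0 := fun h => hξ (by simp [h])
    exact hρ i (subset_tsupport _ hρξ)

variable [MeasurableSpace V] [BorelSpace V] {f K φ w : V → ℂ} {C : ℝ}

lemma fourier_eq_integral_unitaryChar_mul (φ : V → ℂ) (ξ : V) :
    𝓕 φ ξ = ∫ y, unitaryChar (-ξ) y * φ y := by
  simp only [Real.fourier_eq, unitaryChar, inner_neg_right, Circle.smul_def, smul_eq_mul]

lemma fourier_unitaryChar_neg_mul (η : V) :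
    𝓕 (unitaryChar (-η) * φ) = fun ξ => 𝓕 φ (ξ + η) := by
  ext ξ
  simp only [fourier_eq_integral_unitaryChar_mul, Pi.mul_apply, unitaryChar, neg_add,
    inner_add_right, AddChar.map_add_eq_mul, Circle.coe_mul, mul_assoc]

lemma integrable_unitaryChar_mul (η : V) (hφ : Integrable φ) : Integrable (unitaryChar η * φ) :=
  hφ.bdd_mul (continuous_unitaryChar η).aestronglyMeasurable
    (.of_forall fun y => (norm_unitaryChar η y).le)

lemma fourier_l1Dilate {ε : ℝ} (hε : 0 < ε) (w : V → ℂ) (ξ : V) :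
    𝓕 (l1Dilate ε w) ξ = 𝓕 w (ε⁻¹ • ξ) := by
  rw [Real.fourier_eq, Real.fourier_eq,
    ← integral_pow_finrank_smul_comp_smul hε fun y => Real.fourierChar (-⟪y, ε⁻¹ • ξ⟫) • w y]
  congr 1 with y
  rw [l1Dilate, smul_comm, real_inner_smul_left, real_inner_smul_right,
    mul_inv_cancel_left₀ hε.ne']

lemma bddAbove_range_norm_of_integrable_fourier (hcont : Continuous φ) (hφ : Integrable φ)
    (hFφ : Integrable (𝓕 φ)) : BddAbove (range fun x => ‖φ x‖) := by
  refine ⟨∫ ξ, ‖𝓕 φ ξ‖, forall_mem_range.2 fun x => ?_⟩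
  rw [← congrFun (hcont.fourierInv_fourier_eq hφ hFφ) x, Real.fourierInv_eq]
  exact (norm_integral_le_integral_norm _).trans_eq (by simp only [Circle.norm_smul])

lemma convolution_eq_self_of_fourier_eq_one (hw : Integrable w) (hcont : Continuous φ)
    (hφ : Integrable φ) (hFφ : Integrable (𝓕 φ)) (h_one : ∀ ξ, 𝓕 φ ξ ≠ 0 → 𝓕 w ξ = 1) :
    w ⋆[ContinuousLinearMap.mul ℂ ℂ] φ = φ := by
  have hfourier : 𝓕 (w ⋆[ContinuousLinearMap.mul ℂ ℂ] φ) = 𝓕 φ := by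
    ext ξ
    rw [Real.fourier_mul_convolution_eq hw hφ]
    by_cases hξ : 𝓕 φ ξ = 0
    · rw [hξ, mul_zero]
    · rw [h_one ξ hξ, one_mul]
  have hconv_cont : Continuous (w ⋆[ContinuousLinearMap.mul ℂ ℂ] φ) :=
    (bddAbove_range_norm_of_integrable_fourier hcont hφ
      hFφ).continuous_convolution_right_of_integrable _ hw hcont
  rw [← hconv_cont.fourierInv_fourier_eq (hw.integrable_convolution _ hφ) (by rwa [hfourier]),
    hfourier, hcont.fourierInv_fourier_eq hφ hFφ]

variable (V) in
lemma exists_schwartzMap_fourier_eq_one_on_closedBall :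
    ∃ w : 𝓢(V, ℂ), HasCompactSupport (𝓕 (w : V → ℂ)) ∧
      ∀ ξ ∈ Metric.closedBall (0 : V) 1, 𝓕 (w : V → ℂ) ξ = 1 := by
  let b : ContDiffBump (0 : V) := ⟨1, 2, one_pos, one_lt_two⟩
  have hsmooth : ContDiff ℝ ∞ fun x => (b x : ℂ) := Complex.ofRealCLM.contDiff.comp b.contDiff
  have hsupp : HasCompactSupport fun x => (b x : ℂ) :=
    b.hasCompactSupport.comp_left (g := fun x : ℝ => (x : ℂ)) rfl
  let χ : 𝓢(V, ℂ) := hsupp.toSchwartzMap hsmooth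
  have hχ : 𝓕 ((𝓕⁻ χ : 𝓢(V, ℂ)) : V → ℂ) = fun x => (b x : ℂ) := by
    rw [← SchwartzMap.fourier_coe, FourierTransform.fourier_fourierInv_eq]
    rfl
  refine ⟨𝓕⁻ χ, ?_, fun ξ hξ => ?_⟩
  · rwa [hχ]
  · rw [hχ]
    simp only [b.one_of_mem_closedBall hξ, Complex.ofReal_one]

lemma exists_ball_crossCorr_eq_zero_of_integral_ne_zero (hf : AEStronglyMeasurable f)
    (hC : ∀ᵐ x, ‖f x‖ ≤ C) (hK : Integrable K) (hfK : crossCorr volume f K = 0)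
    (hK₀ : ∫ y, K y ≠ 0) :
    ∃ r > 0, ∀ φ : V → ℂ, Continuous φ → Integrable φ → Integrable (𝓕 φ) →
      Function.support (𝓕 φ) ⊆ Metric.ball 0 r → crossCorr volume f φ = 0 := by
  obtain ⟨w, -, hw_one⟩ := exists_schwartzMap_fourier_eq_one_on_closedBall V
  have hsmall : ∀ᶠ ε : ℝ in 𝓝[>] 0,
      ∫ y, ‖K y‖ * translationModulus volume w (ε • y) < ‖∫ y, K y‖ :=
    ((tendsto_integral_norm_mul_translationModulus hK w.integrable).mono_left
      nhdsWithin_le_nhds).eventually_lt_const (norm_pos_iff.2 hK₀)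
  obtain ⟨ε, hε_small, hε : 0 < ε⟩ := (hsmall.and self_mem_nhdsWithin).exists
  refine ⟨ε, hε, fun φ hcont hφ hFφ hsupp => ?_⟩
  have hw_int := integrable_l1Dilate hε (w.integrable (μ := volume))
  refine crossCorr_eq_zero_of_convolution_eq_self hf hC hK hw_int hφ hfK
    (convolution_eq_self_of_fourier_eq_one hw_int hcont hφ hFφ fun ξ hξ => ?_)
    (by simpa only [translationModulus_l1Dilate hε] using hε_small)
  have hξε : ‖ξ‖ < ε := mem_ball_zero_iff.1 (hsupp hξ)
  rw [fourier_l1Dilate hε, hw_one]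
  rw [mem_closedBall_zero_iff, norm_smul, norm_inv, Real.norm_of_nonneg hε.le,
    inv_mul_le_iff₀ hε, mul_one]
  exact hξε.le

lemma exists_ball_crossCorr_eq_zero_of_fourier_ne_zero (hf : AEStronglyMeasurable f)
    (hC : ∀ᵐ x, ‖f x‖ ≤ C) (hK : Integrable K) (hfK : crossCorr volume f K = 0) {η : V}
    (hη : 𝓕 K η ≠ 0) :
    ∃ r > 0, ∀ φ : V → ℂ, Continuous φ → Integrable φ → Integrable (𝓕 φ) →
      Function.support (𝓕 φ) ⊆ Metric.ball η r → crossCorr volume f φ = 0 := by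
  have hmod : ∀ (g : V → ℂ) (x : V), crossCorr volume (unitaryChar η * f) (unitaryChar (-η) * g) x =
      unitaryChar η x * crossCorr volume f g x := by
    intro g x
    rw [crossCorr_mul_of_map_add_eq_mul (unitaryChar_add η), ← mul_assoc,
      unitaryChar_mul_unitaryChar_neg, one_mul]
  obtain ⟨r, hr, hlocal⟩ := exists_ball_crossCorr_eq_zero_of_integral_ne_zero (C := C)
    ((continuous_unitaryChar η).aestronglyMeasurable.mul hf)
    (hC.mono fun x hx => by rwa [Pi.mul_apply, norm_mul, norm_unitaryChar, one_mul])
    (integrable_unitaryChar_mul (-η) hK)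
    (by ext x; rw [hmod, hfK, Pi.zero_apply, mul_zero])
    (by rwa [fourier_eq_integral_unitaryChar_mul] at hη)
  refine ⟨r, hr, fun φ hcont hφ hFφ hsupp => ?_⟩
  have hzero := hlocal (unitaryChar (-η) * φ) ((continuous_unitaryChar _).mul hcont)
    (integrable_unitaryChar_mul _ hφ)
    (by rw [fourier_unitaryChar_neg_mul]; exact hFφ.comp_add_right η)
    (fun ξ hξ => by
      rw [fourier_unitaryChar_neg_mul] at hξ
      simpa [dist_eq_norm] using hsupp hξ)
  ext x
  refine (mul_eq_zero.1 ((hmod φ x).symm.trans (congrFun hzero x))).resolve_left ?_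
  exact norm_ne_zero_iff.1 (by rw [norm_unitaryChar]; exact one_ne_zero)

lemma crossCorr_eq_zero_of_hasCompactSupport_fourier (hf : AEStronglyMeasurable f)
    (hC : ∀ᵐ x, ‖f x‖ ≤ C) (hK : Integrable K) (hfK : crossCorr volume f K = 0)
    (hFK : ∀ η, 𝓕 K η ≠ 0) (hcont : Continuous φ) (hφ : Integrable φ)
    (hsmooth : ContDiff ℝ ∞ (𝓕 φ)) (hsupp : HasCompactSupport (𝓕 φ)) :
    crossCorr volume f φ = 0 := by
  choose r hr hlocal using fun η =>
    exists_ball_crossCorr_eq_zero_of_fourier_ne_zero hf hC hK hfK (hFK η)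
  obtain ⟨s, P, hsum, hP⟩ := exists_finset_sum_schwartzMap_support_subset_ball hsmooth hsupp hr
  let Φ : V → 𝓢(V, ℂ) := fun i => 𝓕⁻ (P i)
  have hφ_sum : φ = ∑ i ∈ s, (Φ i : V → ℂ) :=
    calc φ = 𝓕⁻ (𝓕 φ) := (hcont.fourierInv_fourier_eq hφ
          (hsmooth.continuous.integrable_of_hasCompactSupport hsupp)).symm
      _ = (𝓕⁻ (hsupp.toSchwartzMap hsmooth) : 𝓢(V, ℂ)) :=
          (SchwartzMap.fourierInv_coe (hsupp.toSchwartzMap hsmooth)).symm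
      _ = (∑ i ∈ s, Φ i : 𝓢(V, ℂ)) := by
          rw [hsum]
          exact congrArg _ (map_sum (FourierTransform.fourierCLE ℂ 𝓢(V, ℂ)).symm P s)
      _ = ∑ i ∈ s, (Φ i : V → ℂ) := by ext; simp only [sum_apply, Finset.sum_apply]
  have hpiece (i : V) : crossCorr volume f (Φ i) = 0 := by
    have hFΦ : 𝓕 (Φ i : V → ℂ) = P i := by
      rw [← SchwartzMap.fourier_coe, FourierTransform.fourier_fourierInv_eq]
    refine hlocal i _ (Φ i).continuous (Φ i).integrable ?_ ?_
    · rw [hFΦ]; exact (P i).integrable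
    · rw [hFΦ]; exact hP i
  ext x
  rw [hφ_sum, crossCorr_finsetSum_right s hf hC fun i _ => (Φ i).integrable]
  simp only [hpiece, Pi.zero_apply, Finset.sum_const_zero]

lemma crossCorr_l1Dilate_schwartzMap_eq_zero (hf : AEStronglyMeasurable f)
    (hC : ∀ᵐ x, ‖f x‖ ≤ C) (hK : Integrable K) (hfK : crossCorr volume f K = 0)
    (hFK : ∀ η, 𝓕 K η ≠ 0) (w : 𝓢(V, ℂ)) (hw : HasCompactSupport (𝓕 (w : V → ℂ)))
    {R : ℝ} (hR : 0 < R) : crossCorr volume f (l1Dilate R w) = 0 := by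
  have hfourier : 𝓕 (l1Dilate R w) = fun ξ => 𝓕 w (R⁻¹ • ξ) := funext (fourier_l1Dilate hR w)
  refine crossCorr_eq_zero_of_hasCompactSupport_fourier hf hC hK hfK hFK
    ((w.continuous.comp (continuous_const_smul R)).const_smul (R ^ Module.finrank ℝ V))
    (integrable_l1Dilate hR w.integrable) ?_ ?_
  · rw [hfourier]
    exact ((𝓕 w).smooth ⊤).comp (contDiff_const_smul R⁻¹)
  · rw [hfourier]
    exact hw.comp_homeomorph (Homeomorph.smulOfNeZero R⁻¹ (inv_ne_zero hR.ne'))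

theorem ae_eq_zero_of_crossCorr_eq_zero_of_fourier_ne_zero (hf : AEStronglyMeasurable f)
    (hC : ∀ᵐ x, ‖f x‖ ≤ C) (hK : Integrable K) (hfK : crossCorr volume f K = 0)
    (hFK : ∀ η, 𝓕 K η ≠ 0) : ∀ᵐ x, f x = 0 := by
  obtain ⟨w, hw_supp, hw_one⟩ := exists_schwartzMap_fourier_eq_one_on_closedBall V
  have hw_int : ∫ y, w y = 1 := by
    simpa [Real.fourier_eq] using hw_one 0 (Metric.mem_closedBall_self zero_le_one)
  have hC₀ : 0 ≤ C := by
    obtain ⟨x, hx⟩ := hC.exists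
    exact (norm_nonneg _).trans hx
  have hf_loc : LocallyIntegrable f :=
    (locallyIntegrable_const C).mono hf (hC.mono fun x hx => hx.trans (le_abs_self C))
  refine ae_eq_zero_of_integral_contDiff_smul_eq_zero hf_loc fun g hg_smooth hg_supp => ?_
  have hg : Integrable fun x => (g x : ℂ) :=
    (hg_smooth.continuous.integrable_of_hasCompactSupport hg_supp).ofReal
  have hpairing : ∫ x, g x • f x = crossCorr volume f (fun x => (g x : ℂ)) 0 := by
    simp only [crossCorr, zero_add, Complex.real_smul, mul_comm]
  have htendsto := ((tendsto_integral_norm_mul_translationModulus (w.integrable (μ := volume))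
    hg).comp tendsto_inv_atTop_zero).const_mul C
  rw [mul_zero] at htendsto
  rw [hpairing, ← norm_le_zero_iff]
  refine ge_of_tendsto htendsto ?_
  filter_upwards [eventually_gt_atTop 0] with R hR
  have hbound := norm_integral_mul_norm_crossCorr_le (x := 0) hf hC hC₀
    (integrable_l1Dilate hR w.integrable) hg
    (crossCorr_l1Dilate_schwartzMap_eq_zero hf hC hK hfK hFK w hw_supp hR)
  rwa [integral_l1Dilate hR, hw_int, norm_one, one_mul, integral_norm_l1Dilate_mul hR] at hbound

end Wiener

section LogCoordinates

variable {ι : Type*}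

/-- The coordinatewise exponential, a diffeomorphism of `ℝ^ι` onto the open positive orthant
carrying addition to multiplication. -/
def expVec (u : ι → ℝ) : ι → ℝ := fun i => Real.exp (u i)

lemma expVec_add (u v : ι → ℝ) : expVec (u + v) = expVec u * expVec v :=
  funext fun _ => Real.exp_add _ _

lemma expVec_injective : Function.Injective (expVec : (ι → ℝ) → ι → ℝ) := fun _ _ h =>
  funext fun i => Real.exp_injective (congrFun h i)

lemma continuous_expVec : Continuous (expVec : (ι → ℝ) → ι → ℝ) := by
  unfold expVec
  fun_prop

lemma hasFDerivAt_expVec [Finite ι] (u : ι → ℝ) :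
    HasFDerivAt expVec (.pi fun i => expVec u i • .proj i : (ι → ℝ) →L[ℝ] ι → ℝ) u := by
  have := Fintype.ofFinite ι
  exact hasFDerivAt_pi.2 fun i => (hasFDerivAt_apply (𝕜 := ℝ) i u).exp

variable [Fintype ι]

/-- The exponential `u ↦ e^{z·u}` on `ℝ^ι`: the monomial `x ↦ x^z` in the coordinates
`x = expVec u`. -/
def expDot (z : ι → ℂ) (u : ι → ℝ) : ℂ := cexp (∑ i, z i * u i)

lemma expDot_add_right (z : ι → ℂ) (u v : ι → ℝ) :
    expDot z (u + v) = expDot z u * expDot z v := by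
  simp only [expDot, Pi.add_apply, ofReal_add, mul_add, Finset.sum_add_distrib, Complex.exp_add]

lemma expDot_add_left (z w : ι → ℂ) (u : ι → ℝ) :
    expDot (z + w) u = expDot z u * expDot w u := by
  simp only [expDot, Pi.add_apply, add_mul, Finset.sum_add_distrib, Complex.exp_add]

lemma expDot_zero_left (u : ι → ℝ) : expDot 0 u = 1 := by simp [expDot]

lemma expDot_ne_zero (z : ι → ℂ) (u : ι → ℝ) : expDot z u ≠ 0 := Complex.exp_ne_zero _

lemma norm_expDot_I_mul (ξ u : ι → ℝ) : ‖expDot (fun i => I * ξ i) u‖ = 1 := by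
  simp [expDot, Complex.norm_exp]

lemma expDot_add_smul_one (z : ι → ℂ) (u : ι → ℝ) (t : ℝ) :
    expDot z (u + t • 1) = expDot z u * cexp ((∑ i, z i) * t) := by
  rw [expDot_add_right, Finset.sum_mul]
  simp [expDot]

lemma continuous_expDot (z : ι → ℂ) : Continuous (expDot z) := by
  unfold expDot
  fun_prop

lemma cpow_ofReal_exp (t : ℝ) (s : ℂ) : (Real.exp t : ℂ) ^ s = cexp (s * t) := by
  rw [cpow_def_of_ne_zero (ofReal_ne_zero.2 (Real.exp_pos t).ne'),
    ← ofReal_log (Real.exp_pos t).le, Real.log_exp, mul_comm]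

lemma prod_cpow_expVec (z : ι → ℂ) (u : ι → ℝ) :
    ∏ i, (expVec u i : ℂ) ^ z i = expDot z u := by
  simp only [expVec, cpow_ofReal_exp, expDot, Complex.exp_sum]

lemma ofReal_prod_expVec (u : ι → ℝ) : ((∏ i, expVec u i : ℝ) : ℂ) = expDot 1 u := by
  simp [expVec, expDot, Complex.exp_sum]

lemma ofReal_prod_rpow_expVec (c u : ι → ℝ) :
    ((∏ i, expVec u i ^ c i : ℝ) : ℂ) = expDot (fun i => c i) u := by
  rw [← prod_cpow_expVec, ofReal_prod]
  exact Finset.prod_congr rfl fun i _ => ofReal_cpow (Real.exp_pos _).le _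

lemma det_pi_smul_proj (a : ι → ℝ) :
    (.pi fun i => a i • .proj i : (ι → ℝ) →L[ℝ] ι → ℝ).det = ∏ i, a i := by
  classical
  have hdiag : ((.pi fun i => a i • .proj i : (ι → ℝ) →L[ℝ] ι → ℝ) : (ι → ℝ) →ₗ[ℝ] ι → ℝ) =
      Matrix.toLin' (Matrix.diagonal a) := by
    ext v i
    simp [Matrix.mulVec_diagonal]
  rw [ContinuousLinearMap.det, hdiag, LinearMap.det_toLin', Matrix.det_diagonal]

lemma abs_det_fderiv_expVec (u : ι → ℝ) :
    |(.pi fun i => expVec u i • .proj i : (ι → ℝ) →L[ℝ] ι → ℝ).det| = ∏ i, expVec u i := by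
  rw [det_pi_smul_proj]
  exact abs_of_pos (Finset.prod_pos fun i _ => Real.exp_pos _)

end LogCoordinates

section PositiveOrthant

variable {n : ℕ}

lemma expVec_mem_posOrth (u : Fin n → ℝ) : expVec u ∈ posOrth n := fun _ => Real.exp_pos _

lemma image_expVec_univ : expVec '' univ = posOrth n := by
  refine Subset.antisymm (image_subset_iff.2 fun u _ => expVec_mem_posOrth u) fun x hx => ?_
  exact ⟨fun i => Real.log (x i), mem_univ _, funext fun i => Real.exp_log (hx i)⟩

lemma exists_expVec_eq {x : Fin n → ℝ} (hx : x ∈ posOrth n) : ∃ u, expVec u = x := by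
  simpa [← image_expVec_univ] using hx

lemma isOpen_posOrth : IsOpen (posOrth n) := by
  simp only [posOrth, ofPred_forall]
  exact isOpen_iInter_of_finite fun i => isOpen_lt continuous_const (continuous_apply i)

lemma measurableEmbedding_expVec : MeasurableEmbedding (expVec : (Fin n → ℝ) → Fin n → ℝ) :=
  continuous_expVec.measurableEmbedding expVec_injective

lemma map_expVec_withDensity :
    (volume.withDensity fun u : Fin n → ℝ => ENNReal.ofReal (∏ i, expVec u i)).map expVec =
      volume.restrict (posOrth n) := by
  simpa only [Measure.restrict_univ, abs_det_fderiv_expVec, image_expVec_univ] using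
    map_withDensity_abs_det_fderiv_eq_addHaar (volume : Measure (Fin n → ℝ))
      nullMeasurableSet_univ (fun u _ => (hasFDerivAt_expVec u).hasFDerivWithinAt)
      expVec_injective.injOn

lemma ae_restrict_posOrth_iff {P : (Fin n → ℝ) → Prop} :
    (∀ᵐ x ∂volume.restrict (posOrth n), P x) ↔ ∀ᵐ u, P (expVec u) := by
  have hdensity (u : Fin n → ℝ) : ENNReal.ofReal (∏ i, expVec u i) ≠ 0 := by
    simpa using Finset.prod_pos fun i _ => expVec_mem_posOrth u i
  have hmeas : Measurable fun u : Fin n → ℝ => ENNReal.ofReal (∏ i, expVec u i) := by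
    unfold expVec
    fun_prop
  rw [← map_expVec_withDensity, measurableEmbedding_expVec.ae_map_iff,
    ae_withDensity_iff hmeas]
  simp only [ne_eq, hdensity, not_false_eq_true, true_imp_iff]

lemma quasiMeasurePreserving_expVec :
    Measure.QuasiMeasurePreserving expVec volume (volume.restrict (posOrth n)) := by
  refine ⟨continuous_expVec.measurable, Measure.AbsolutelyContinuous.mk fun s hs hs0 => ?_⟩
  rw [Measure.map_apply continuous_expVec.measurable hs, ← compl_compl (expVec ⁻¹' s), ← mem_ae_iff]
  exact ae_restrict_posOrth_iff.1 (measure_eq_zero_iff_ae_notMem.1 hs0)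

variable {F : Type*} [NormedAddCommGroup F] [NormedSpace ℝ F]

lemma setIntegral_posOrth_eq (g : (Fin n → ℝ) → F) :
    ∫ x in posOrth n, g x = ∫ u, (∏ i, expVec u i) • g (expVec u) := by
  simpa only [Measure.restrict_univ, abs_det_fderiv_expVec, image_expVec_univ] using
    integral_image_eq_integral_abs_det_fderiv_smul volume MeasurableSet.univ
      (fun u _ => (hasFDerivAt_expVec u).hasFDerivWithinAt) expVec_injective.injOn g

lemma integrableOn_posOrth_iff {g : (Fin n → ℝ) → F} :
    IntegrableOn g (posOrth n) ↔ Integrable fun u => (∏ i, expVec u i) • g (expVec u) := by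
  simpa only [integrableOn_univ, abs_det_fderiv_expVec, image_expVec_univ] using
    integrableOn_image_iff_integrableOn_abs_det_fderiv_smul volume MeasurableSet.univ
      (fun u _ => (hasFDerivAt_expVec u).hasFDerivWithinAt) expVec_injective.injOn g

end PositiveOrthant

section LogPullback

variable {n : ℕ} {z : Fin n → ℂ} {f k : (Fin n → ℝ) → ℂ}

/-- The function `u ↦ e^{z·u} f(e^u)`, i.e. `x^z f(x)` in logarithmic coordinates; its integral is
the Mellin transform of `f` at `z`. -/
def logPullback (z : Fin n → ℂ) (f : (Fin n → ℝ) → ℂ) (u : Fin n → ℝ) : ℂ :=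
  expDot z u * f (expVec u)

lemma logPullback_add_left (z w : Fin n → ℂ) (f : (Fin n → ℝ) → ℂ) :
    logPullback (fun i => z i + w i) f = expDot w * logPullback z f := by
  ext u
  rw [Pi.mul_apply, logPullback, logPullback, ← mul_assoc, ← expDot_add_left, add_comm w]
  rfl

lemma mellinT_eq_integral_logPullback (g : (Fin n → ℝ) → ℝ) (z : Fin n → ℂ) :
    mellinT n g z = ∫ u, logPullback z (fun x => g x) u := by
  rw [mellinT, setIntegral_posOrth_eq]
  congr 1 with u
  rw [real_smul, ofReal_prod_expVec, ← mul_assoc, logPullback]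
  congr 1
  rw [prod_cpow_expVec (fun i => z i - 1) u, ← expDot_add_left]
  exact congrArg (expDot · u) (add_sub_cancel 1 z)

lemma prod_expVec_smul_dilate_mul (z : Fin n → ℂ) (v u : Fin n → ℝ) :
    (∏ i, expVec u i) • (k (expVec v * expVec u) * f (expVec u)) =
      expDot (-z) v * (logPullback (1 - z) f u * logPullback z k (u + v)) := by
  have hexp : expDot (-z) v * expDot (1 - z) u * expDot z (u + v) = expDot 1 u := by
    have hv : expDot (-z) v * expDot z v = 1 := by
      rw [← expDot_add_left, neg_add_cancel, expDot_zero_left]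
    have hu : expDot (1 - z) u * expDot z u = expDot 1 u := by
      rw [← expDot_add_left, sub_add_cancel]
    rw [expDot_add_right, mul_comm (expDot z u), mul_mul_mul_comm, hv, hu, one_mul]
  rw [real_smul, ofReal_prod_expVec, ← hexp, mul_comm (expVec v), ← expVec_add]
  simp only [logPullback]
  ring

lemma setIntegral_posOrth_dilate_mul (z : Fin n → ℂ) (v : Fin n → ℝ) :
    ∫ x in posOrth n, k (expVec v * x) * f x =
      expDot (-z) v * crossCorr volume (logPullback (1 - z) f) (logPullback z k) (-v) := by
  rw [setIntegral_posOrth_eq, crossCorr,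
    ← integral_add_right_eq_self (fun u => logPullback _ f (-v + u) * _) v, ← integral_const_mul]
  simp only [prod_expVec_smul_dilate_mul z, neg_add_eq_sub, add_sub_cancel_right]

lemma integrableOn_posOrth_dilate_mul {C : ℝ} (hf : AEStronglyMeasurable (logPullback (1 - z) f))
    (hC : ∀ᵐ u, ‖logPullback (1 - z) f u‖ ≤ C) (hk : Integrable (logPullback z k))
    (v : Fin n → ℝ) : IntegrableOn (fun x => k (expVec v * x) * f x) (posOrth n) := by
  simp only [integrableOn_posOrth_iff, prod_expVec_smul_dilate_mul z]
  exact ((hk.comp_add_right v).bdd_mul hf hC).const_mul _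

lemma logPullback_one_sub_prod_cpow (z : Fin n → ℂ) :
    logPullback (1 - z) (fun x => ∏ i, (x i : ℂ) ^ (z i - 1)) = 1 := by
  ext u
  rw [logPullback, prod_cpow_expVec (fun i => z i - 1), ← expDot_add_left, Pi.one_apply]
  refine Eq.trans (congrArg (expDot · u) ?_) (expDot_zero_left u)
  exact (sub_add_sub_cancel 1 z 1).trans (sub_self _)

lemma setIntegral_posOrth_dilate_mul_prod_cpow (k : (Fin n → ℝ) → ℝ) (z : Fin n → ℂ)
    (v : Fin n → ℝ) :
    ∫ x in posOrth n, (k (expVec v * x) : ℂ) * ∏ i, (x i : ℂ) ^ (z i - 1) =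
      expDot (-z) v * mellinT n k z := by
  rw [setIntegral_posOrth_dilate_mul (k := fun x => k x) z, logPullback_one_sub_prod_cpow,
    mellinT_eq_integral_logPullback]
  simp only [crossCorr, Pi.one_apply, one_mul]

lemma integrableOn_posOrth_dilate_mul_prod_cpow (hk : Integrable (logPullback z k))
    (v : Fin n → ℝ) :
    IntegrableOn (fun x => k (expVec v * x) * ∏ i, (x i : ℂ) ^ (z i - 1)) (posOrth n) :=
  integrableOn_posOrth_dilate_mul (C := 1)
    (by rw [logPullback_one_sub_prod_cpow]; exact aestronglyMeasurable_const)
    (by simp [logPullback_one_sub_prod_cpow]) hk v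

lemma integrable_logPullback_add_I_mul (hf : Integrable (logPullback z f)) (ξ : Fin n → ℝ) :
    Integrable (logPullback (fun i => z i + I * ξ i) f) := by
  rw [logPullback_add_left]
  exact hf.bdd_mul (continuous_expDot _).aestronglyMeasurable
    (Eventually.of_forall fun u => (norm_expDot_I_mul ξ u).le)

lemma continuousOn_prod_cpow (z : Fin n → ℂ) :
    ContinuousOn (fun x : Fin n → ℝ => ∏ i, (x i : ℂ) ^ z i) (posOrth n) :=
  continuousOn_finsetProd _ fun i _ =>
    (continuous_ofReal.comp (continuous_apply i)).continuousOn.cpow_const fun _ hx =>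
      ofReal_mem_slitPlane.2 (hx i)

lemma norm_prod_cpow_mul_prod_rpow {x : Fin n → ℝ} (hx : x ∈ posOrth n) (c ξ : Fin n → ℝ) :
    ‖∏ i, (x i : ℂ) ^ ((c i : ℂ) + I * ξ i - 1)‖ * ∏ i, x i ^ (1 - c i) = 1 := by
  rw [norm_prod, ← Finset.prod_mul_distrib]
  refine Finset.prod_eq_one fun i _ => ?_
  rw [norm_cpow_eq_rpow_re_of_pos (hx i), ← Real.rpow_add (hx i)]
  simp

lemma memLinfw_re_prod_cpow (c ξ : Fin n → ℝ) :
    MemLinfw n (fun i => 1 - c i)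
      fun x => (∏ i, (x i : ℂ) ^ ((c i : ℂ) + I * ξ i - 1)).re := by
  refine ⟨(continuous_re.comp_continuousOn (continuousOn_prod_cpow _)).aestronglyMeasurable
    isOpen_posOrth.measurableSet, 1, ?_⟩
  refine ae_restrict_of_forall_mem isOpen_posOrth.measurableSet fun x hx => ?_
  have hweight : 0 < ∏ i, x i ^ (1 - c i) :=
    Finset.prod_pos fun i _ => Real.rpow_pos_of_pos (hx i) _
  rw [abs_mul, abs_of_pos hweight]
  exact (mul_le_mul_of_nonneg_right (abs_re_le_norm _) hweight.le).trans_eq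
    (norm_prod_cpow_mul_prod_rpow hx c ξ)

lemma not_ae_re_prod_cpow_eq_zero (z : Fin n → ℂ) :
    ¬ ∀ᵐ x ∂volume.restrict (posOrth n), (∏ i, (x i : ℂ) ^ z i).re = 0 := by
  intro hzero
  have hone := Measure.eqOn_open_of_ae_eq hzero isOpen_posOrth
    (continuous_re.comp_continuousOn (continuousOn_prod_cpow z)) continuousOn_const
    (fun _ => one_pos : (1 : Fin n → ℝ) ∈ posOrth n)
  simp at hone

end LogPullback

section DilationInjectivity

lemma fourier_comp_ofLp {ι : Type*} [Fintype ι] (K : (ι → ℝ) → ℂ) (η : EuclideanSpace ℝ ι) :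
    𝓕 (fun x : EuclideanSpace ℝ ι => K x.ofLp) η =
      ∫ u, expDot (fun i => I * (-(2 * Real.pi * η i) : ℝ)) u * K u := by
  have hchar (x : EuclideanSpace ℝ ι) :
      (Real.fourierChar (-⟪x, η⟫) : ℂ) =
        expDot (fun i => I * (-(2 * Real.pi * η i) : ℝ)) x.ofLp := by
    rw [Real.fourierChar_apply, expDot]
    congr 1
    simp only [PiLp.inner_apply, RCLike.inner_apply, conj_trivial]
    push_cast
    simp only [mul_neg, neg_mul, Finset.mul_sum, Finset.sum_mul, Finset.sum_neg_distrib]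
    exact congrArg _ (Finset.sum_congr rfl fun i _ => by ring)
  simp only [Real.fourier_eq, Circle.smul_def, hchar, smul_eq_mul]
  exact (EuclideanSpace.volume_preserving_symm_measurableEquiv_toLp ι).integral_comp
    (MeasurableEquiv.measurableEmbedding _) fun u => expDot _ u * K u

theorem ae_eq_zero_of_crossCorr_eq_zero_of_integral_expDot_ne_zero {ι : Type*} [Fintype ι]
    {f K : (ι → ℝ) → ℂ} {C : ℝ} (hf : AEStronglyMeasurable f) (hC : ∀ᵐ u, ‖f u‖ ≤ C)
    (hK : Integrable K) (hfK : crossCorr volume f K = 0)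
    (hFK : ∀ ξ : ι → ℝ, ∫ u, expDot (fun i => I * ξ i) u * K u ≠ 0) : ∀ᵐ u, f u = 0 := by
  have hmp := EuclideanSpace.volume_preserving_symm_measurableEquiv_toLp ι
  have hemb := (MeasurableEquiv.toLp 2 (ι → ℝ)).symm.measurableEmbedding
  have hzero : ∀ᵐ x : EuclideanSpace ℝ ι, f x.ofLp = 0 := by
    refine ae_eq_zero_of_crossCorr_eq_zero_of_fourier_ne_zero (K := fun x => K x.ofLp) (C := C)
      (hf.comp_measurePreserving hmp) (hmp.quasiMeasurePreserving.ae hC)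
      (hmp.integrable_comp_of_integrable hK) ?_ fun η => ?_
    · ext x
      exact (hmp.integral_comp hemb fun u => f (x.ofLp + u) * K u).trans (congrFun hfK x.ofLp)
    · exact fourier_comp_ofLp K η ▸ hFK _
  rw [← hmp.map_eq]
  exact hemb.ae_map_iff.2 hzero

variable {n : ℕ} {c : Fin n → ℝ} {k : (Fin n → ℝ) → ℝ}

lemma mellinT_add_I_mul_eq_integral (c ξ : Fin n → ℝ) :
    mellinT n k (fun i => c i + I * ξ i) =
      ∫ u, expDot (fun i => I * ξ i) u * logPullback (fun i => c i) (fun x => k x) u := by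
  rw [mellinT_eq_integral_logPullback, logPullback_add_left]
  rfl

lemma MemLinfw.aestronglyMeasurable_logPullback {a : Fin n → ℝ} {f : (Fin n → ℝ) → ℝ}
    (hf : MemLinfw n a f) (z : Fin n → ℂ) :
    AEStronglyMeasurable (logPullback z fun x => f x) :=
  (continuous_expDot _).aestronglyMeasurable.mul <|
    continuous_ofReal.comp_aestronglyMeasurable <|
      hf.1.comp_quasiMeasurePreserving quasiMeasurePreserving_expVec

lemma MemLinfw.exists_ae_norm_logPullback_le {a : Fin n → ℝ} {f : (Fin n → ℝ) → ℝ}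
    (hf : MemLinfw n a f) : ∃ C, ∀ᵐ u, ‖logPullback (fun i => a i) (fun x => f x) u‖ ≤ C := by
  obtain ⟨C, hC⟩ := hf.2
  refine ⟨C, (ae_restrict_posOrth_iff.1 hC).mono fun u hu => ?_⟩
  rwa [logPullback, ← ofReal_prod_rpow_expVec, ← ofReal_mul, norm_real, mul_comm]

lemma ae_eq_zero_of_forall_mellinT_ne_zero
    (hk : Integrable (logPullback (fun i => c i) fun x => k x))
    (hM : ∀ ξ : Fin n → ℝ, mellinT n k (fun i => c i + I * ξ i) ≠ 0) {f : (Fin n → ℝ) → ℝ}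
    (hf : MemLinfw n (fun i => 1 - c i) f)
    (hzero : ∀ p ∈ posOrth n, ∫ x in posOrth n, k (p * x) * f x = 0) :
    ∀ᵐ x ∂volume.restrict (posOrth n), f x = 0 := by
  set z : Fin n → ℂ := fun i => c i
  have hweight : (fun i => ((1 - c i : ℝ) : ℂ)) = 1 - z := by ext i; simp [z]
  obtain ⟨C, hC⟩ := hf.exists_ae_norm_logPullback_le
  have hcorr : crossCorr volume (logPullback (1 - z) fun x => f x)
      (logPullback z fun x => k x) = 0 := by
    ext v
    have hv := setIntegral_posOrth_dilate_mul (k := fun x => k x) (f := fun x => f x) z (-v)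
    simp only [← ofReal_mul] at hv
    rw [integral_complex_ofReal, hzero _ (expVec_mem_posOrth _), neg_neg, ofReal_zero] at hv
    exact (mul_eq_zero.1 hv.symm).resolve_left (expDot_ne_zero _ _)
  have hae := ae_eq_zero_of_crossCorr_eq_zero_of_integral_expDot_ne_zero
    (hf.aestronglyMeasurable_logPullback _) (hweight ▸ hC) hk hcorr
    fun ξ => mellinT_add_I_mul_eq_integral c ξ ▸ hM ξ
  refine ae_restrict_posOrth_iff.2 (hae.mono fun u hu => ?_)
  exact ofReal_eq_zero.1 ((mul_eq_zero.1 hu).resolve_left (expDot_ne_zero _ _))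

lemma setIntegral_dilate_mul_re_prod_cpow_eq_zero {z : Fin n → ℂ}
    (hk : Integrable (logPullback z fun x => k x)) (hM : mellinT n k z = 0)
    {p : Fin n → ℝ} (hp : p ∈ posOrth n) :
    ∫ x in posOrth n, k (p * x) * (∏ i, (x i : ℂ) ^ (z i - 1)).re = 0 := by
  obtain ⟨v, rfl⟩ := exists_expVec_eq hp
  have hre := integral_re (integrableOn_posOrth_dilate_mul_prod_cpow hk v)
  simpa only [RCLike.re_eq_complex_re, re_ofReal_mul,
    setIntegral_posOrth_dilate_mul_prod_cpow, hM, mul_zero, zero_re] using hre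

theorem dilation_kernel_injective_iff (hk : Integrable (logPullback (fun i => c i) fun x => k x)) :
    (∀ f : (Fin n → ℝ) → ℝ, MemLinfw n (fun i => 1 - c i) f →
        (∀ p ∈ posOrth n, ∫ x in posOrth n, k (p * x) * f x = 0) →
        ∀ᵐ x ∂volume.restrict (posOrth n), f x = 0) ↔
      ∀ ξ : Fin n → ℝ, mellinT n k (fun i => c i + I * ξ i) ≠ 0 := by
  refine ⟨fun hinj ξ hM => ?_, fun hM f => ae_eq_zero_of_forall_mellinT_ne_zero hk hM⟩
  exact not_ae_re_prod_cpow_eq_zero _ <| hinj _ (memLinfw_re_prod_cpow c ξ) fun p =>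
    setIntegral_dilate_mul_re_prod_cpow_eq_zero (integrable_logPullback_add_I_mul hk ξ) hM

end DilationInjectivity

section LevelSwap

variable {V : Type*} [AddCommGroup V] [Module ℝ V] {Q : V → ℝ} {e : V}

/-- The map `(u, t) ↦ (u + (t - Q u) • e, Q u)`, which moves `u` along `e` to the level `t` of `Q`
and records the level it left. It is an involution when `Q (u + t • e) = Q u + t`, and plays the
role of polar coordinates with `Q` as logarithmic radius. -/
def levelSwap (Q : V → ℝ) (e : V) (p : V × ℝ) : V × ℝ :=
  (p.1 + (p.2 - Q p.1) • e, Q p.1)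

lemma apply_levelSwap_fst (hQe : ∀ u t, Q (u + t • e) = Q u + t) (p : V × ℝ) :
    Q (levelSwap Q e p).1 = p.2 := by
  rw [levelSwap, hQe, add_sub_cancel]

lemma levelSwap_involutive (hQe : ∀ u t, Q (u + t • e) = Q u + t) :
    Function.Involutive (levelSwap Q e) := fun p => by
  refine Prod.ext ?_ (apply_levelSwap_fst hQe p)
  change (levelSwap Q e p).1 + (Q p.1 - Q (levelSwap Q e p).1) • e = p.1
  rw [apply_levelSwap_fst hQe, levelSwap, add_assoc, ← add_smul]
  simp

lemma mul_comp_levelSwap {E : V → ℂ} {s : ℂ} (G H : ℝ → ℂ)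
    (hQe : ∀ u t, Q (u + t • e) = Q u + t)
    (hE : ∀ (u : V) (t : ℝ), E (u + t • e) = E u * cexp (s * t)) (p : V × ℝ) :
    E (levelSwap Q e p).1 * G (Q (levelSwap Q e p).1) *
        (cexp (s * (levelSwap Q e p).2) * H (levelSwap Q e p).2) =
      E p.1 * H (Q p.1) * (cexp (s * p.2) * G p.2) := by
  have hexp : cexp (s * ((p.2 - Q p.1 : ℝ) : ℂ)) * cexp (s * Q p.1) = cexp (s * p.2) := by
    rw [← Complex.exp_add, ← mul_add, ofReal_sub, sub_add_cancel]
  rw [apply_levelSwap_fst hQe, levelSwap, hE, ← hexp]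
  ring

variable [MeasurableSpace V] [MeasurableAdd₂ V] [MeasurableSMul ℝ V]

lemma measurableEmbedding_levelSwap (hQ : Measurable Q)
    (hQe : ∀ u t, Q (u + t • e) = Q u + t) : MeasurableEmbedding (levelSwap Q e) :=
  (MeasurableEquiv.ofInvolutive _ (levelSwap_involutive hQe)
    ((measurable_fst.add ((measurable_snd.sub (hQ.comp measurable_fst)).smul_const e)).prodMk
      (hQ.comp measurable_fst))).measurableEmbedding

variable {μ : Measure V} [SFinite μ] [μ.IsAddRightInvariant]

lemma measurePreserving_levelSwap (hQ : Measurable Q) (hQe : ∀ u t, Q (u + t • e) = Q u + t) :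
    MeasurePreserving (levelSwap Q e) (μ.prod volume) (μ.prod volume) := by
  have sub_level : MeasurePreserving (fun p : V × ℝ => (p.1, p.2 - Q p.1))
      (μ.prod volume) (μ.prod volume) :=
    (MeasurePreserving.id μ).skew_product (g := fun u t => t - Q u) (by fun_prop)
      (Eventually.of_forall fun u => (measurePreserving_sub_right volume (Q u)).map_eq)
  have shift : MeasurePreserving (fun p : ℝ × V => (p.1, p.2 + p.1 • e))
      (volume.prod μ) (volume.prod μ) :=
    (MeasurePreserving.id volume).skew_product (g := fun t u => u + t • e)
      (measurable_snd.add (measurable_fst.smul_const e))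
      (Eventually.of_forall fun t => (measurePreserving_add_right μ (t • e)).map_eq)
  have reflect_level : MeasurePreserving (fun p : V × ℝ => (p.1, Q p.1 - p.2))
      (μ.prod volume) (μ.prod volume) :=
    (MeasurePreserving.id μ).skew_product (g := fun u t => Q u - t) (by fun_prop)
      (Eventually.of_forall fun u => (Measure.measurePreserving_sub_left volume (Q u)).map_eq)
  convert reflect_level.comp (Measure.measurePreserving_swap.comp
    (shift.comp (Measure.measurePreserving_swap.comp sub_level))) using 1
  ext p <;> simp [levelSwap, hQe]

variable {E : V → ℂ} {s : ℂ} {G H : ℝ → ℂ}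

lemma integrable_mul_comp_of_integrable (hQ : Measurable Q)
    (hQe : ∀ u t, Q (u + t • e) = Q u + t)
    (hE : ∀ (u : V) (t : ℝ), E (u + t • e) = E u * cexp (s * t)) (hG0 : ∀ t, G t ≠ 0)
    (hG : Integrable (fun u => E u * G (Q u)) μ)
    (hH : Integrable fun t : ℝ => cexp (s * t) * H t) :
    Integrable (fun u => E u * H (Q u)) μ := by
  have hswap : Integrable
      (fun p : V × ℝ => E p.1 * H (Q p.1) * (cexp (s * p.2) * G p.2)) (μ.prod volume) :=
    (((measurePreserving_levelSwap hQ hQe).integrable_comp_emb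
      (measurableEmbedding_levelSwap hQ hQe)).2 (hG.mul_prod hH)).congr
      (Eventually.of_forall (mul_comp_levelSwap G H hQe hE))
  obtain ⟨t, ht⟩ := hswap.prod_left_ae.exists
  exact (integrable_mul_const_iff
    (mul_ne_zero (Complex.exp_ne_zero (s * t)) (hG0 t)).isUnit _).1 ht

lemma integral_mul_comp_mul_integral_comm (hQ : Measurable Q)
    (hQe : ∀ u t, Q (u + t • e) = Q u + t)
    (hE : ∀ (u : V) (t : ℝ), E (u + t • e) = E u * cexp (s * t)) :
    (∫ u, E u * H (Q u) ∂μ) * ∫ t : ℝ, cexp (s * t) * G t =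
      (∫ u, E u * G (Q u) ∂μ) * ∫ t : ℝ, cexp (s * t) * H t := by
  have hswap := (measurePreserving_levelSwap (μ := μ) hQ hQe).integral_comp
    (measurableEmbedding_levelSwap hQ hQe)
    fun p => E p.1 * G (Q p.1) * (cexp (s * p.2) * H p.2)
  simp only [mul_comp_levelSwap G H hQe hE] at hswap
  rwa [integral_prod_mul (fun u => E u * H (Q u)) fun t : ℝ => cexp (s * t) * G t,
    integral_prod_mul (fun u => E u * G (Q u)) fun t : ℝ => cexp (s * t) * H t] at hswap

end LevelSwap

section MellinLog

variable {f : ℝ → ℂ} {s : ℂ}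

lemma rexp_smul_cpow_smul (f : ℝ → ℂ) (s : ℂ) (t : ℝ) :
    Real.exp t • ((Real.exp t : ℂ) ^ (s - 1) • f (Real.exp t)) = cexp (s * t) * f (Real.exp t) := by
  rw [cpow_ofReal_exp, real_smul, ofReal_exp, smul_eq_mul, ← mul_assoc, ← Complex.exp_add]
  ring_nf

lemma mellin_eq_integral_exp (f : ℝ → ℂ) (s : ℂ) :
    mellin f s = ∫ t : ℝ, cexp (s * t) * f (Real.exp t) := by
  simpa only [mellin, Measure.restrict_univ, abs_of_pos (Real.exp_pos _), image_univ,
    Real.range_exp, rexp_smul_cpow_smul] using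
    integral_image_eq_integral_abs_deriv_smul MeasurableSet.univ
      (fun t _ => (Real.hasDerivAt_exp t).hasDerivWithinAt) Real.exp_injective.injOn
      fun t => (t : ℂ) ^ (s - 1) • f t

lemma mellinConvergent_iff_integrable_exp :
    MellinConvergent f s ↔ Integrable fun t : ℝ => cexp (s * t) * f (Real.exp t) := by
  simpa only [MellinConvergent, integrableOn_univ, abs_of_pos (Real.exp_pos _), image_univ,
    Real.range_exp, rexp_smul_cpow_smul] using
    integrableOn_image_iff_integrableOn_abs_deriv_smul MeasurableSet.univ
      (fun t _ => (Real.hasDerivAt_exp t).hasDerivWithinAt) Real.exp_injective.injOn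
      fun t => (t : ℂ) ^ (s - 1) • f t

lemma MemL1w1.mellinConvergent {h : ℝ → ℝ} (hh : MemL1w1 s.re h) :
    MellinConvergent (fun t => (h t : ℂ)) s := by
  have hnorm : ∀ t ∈ Ioi (0 : ℝ), ‖(t : ℂ) ^ (s - s.re)‖ = 1 := fun t ht => by
    simp [norm_cpow_eq_rpow_re_of_pos ht]
  have hmeas : ContinuousOn (fun t : ℝ => (t : ℂ) ^ (s - s.re)) (Ioi 0) :=
    continuous_ofReal.continuousOn.cpow_const fun t ht => ofReal_mem_slitPlane.2 ht
  refine (hh.ofReal.bdd_mul (hmeas.aestronglyMeasurable measurableSet_Ioi)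
    (ae_restrict_of_forall_mem measurableSet_Ioi fun t ht => (hnorm t ht).le)).congr ?_
  refine ae_restrict_of_forall_mem measurableSet_Ioi fun t ht => ?_
  have ht0 : (t : ℂ) ≠ 0 := ofReal_ne_zero.2 (ne_of_gt ht)
  have hpow : (t : ℂ) ^ (s - s.re) * ((t ^ (s.re - 1) : ℝ) : ℂ) = (t : ℂ) ^ (s - 1) := by
    rw [ofReal_cpow (le_of_lt ht), ← cpow_add _ _ ht0]
    push_cast
    ring_nf
  change (t : ℂ) ^ (s - s.re) * ((h t * t ^ (s.re - 1) : ℝ) : ℂ) = (t : ℂ) ^ (s - 1) * h t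
  rw [← hpow, ofReal_mul]
  ring

lemma mellinConvergent_exp_neg_mul (hs : 0 < s.re) {δ : ℝ} (hδ : 0 < δ) :
    MellinConvergent (fun t => (Real.exp (-(δ * t)) : ℂ)) s := by
  refine (MellinConvergent.comp_mul_left (f := fun t => (Real.exp (-t) : ℂ)) hδ).2 ?_
  simpa only [MellinConvergent, smul_eq_mul, mul_comm] using GammaIntegral_convergent hs

lemma mellin_exp_neg (hs : 0 < s.re) : mellin (fun t => (Real.exp (-t) : ℂ)) s = Gamma s := by
  rw [Gamma_eq_integral hs, GammaIntegral_eq_mellin]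

lemma integrable_logPullback_exp_neg_mul_sum {n : ℕ} {z : Fin n → ℂ}
    (hz : ∀ i, 0 < (z i).re) {δ : ℝ} (hδ : 0 < δ) :
    Integrable (logPullback z fun x => (Real.exp (-(δ * ∑ i, x i)) : ℂ)) := by
  have hprod := Integrable.fintype_prod (μ := fun _ => volume) fun i =>
    mellinConvergent_iff_integrable_exp.1 (mellinConvergent_exp_neg_mul (hz i) hδ)
  refine hprod.congr (Eventually.of_forall fun u => ?_)
  simp only [logPullback, expDot, expVec, Finset.prod_mul_distrib, Complex.exp_sum,
    Finset.mul_sum, ← Finset.sum_neg_distrib, Real.exp_sum, ofReal_prod]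

end MellinLog

/-- A measurable gauge on the positive orthant: a positive measurable function, positively
homogeneous of degree one, whose unit level set is bounded. The values of `q` outside the orthant
are irrelevant, so measurability is that of the restriction of `q` to it. -/
structure IsMeasurableGauge (n : ℕ) (q : (Fin n → ℝ) → ℝ) : Prop where
  measurable : Measurable ((posOrth n).domRestrict q)
  pos : ∀ x ∈ posOrth n, 0 < q x
  map_smul : ∀ a : ℝ, 0 < a → ∀ x ∈ posOrth n, q (a • x) = a * q x
  isBounded_level_one : Bornology.IsBounded {x | x ∈ posOrth n ∧ q x = 1}

lemma IsCostFun.isMeasurableGauge {n : ℕ} {q : (Fin n → ℝ) → ℝ} (hq : IsCostFun n q) :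
    IsMeasurableGauge n q where
  measurable := hq.1.continuousOn.domRestrict.measurable
  pos := hq.2.1
  map_smul := hq.2.2.1
  isBounded_level_one := hq.2.2.2 1

/-- The gauge in logarithmic coordinates, `u ↦ log q(e^u)`. -/
def logGauge {n : ℕ} (q : (Fin n → ℝ) → ℝ) (u : Fin n → ℝ) : ℝ := Real.log (q (expVec u))

namespace IsMeasurableGauge

variable {n : ℕ} {q : (Fin n → ℝ) → ℝ} {z : Fin n → ℂ} {h : ℝ → ℝ}

lemma exp_logGauge (hq : IsMeasurableGauge n q) (u : Fin n → ℝ) :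
    Real.exp (logGauge q u) = q (expVec u) :=
  Real.exp_log (hq.pos _ (expVec_mem_posOrth u))

lemma measurable_logGauge (hq : IsMeasurableGauge n q) : Measurable (logGauge q) :=
  (hq.measurable.comp
    (continuous_expVec.measurable.subtype_mk (h := expVec_mem_posOrth))).log

lemma logGauge_add_smul_one (hq : IsMeasurableGauge n q) (u : Fin n → ℝ) (t : ℝ) :
    logGauge q (u + t • 1) = logGauge q u + t := by
  have hexp : expVec (u + t • 1) = Real.exp t • expVec u := by
    ext i
    simp [expVec, Real.exp_add, mul_comm]
  rw [logGauge, hexp, hq.map_smul _ (Real.exp_pos t) _ (expVec_mem_posOrth u),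
    Real.log_mul (Real.exp_pos t).ne' (hq.pos _ (expVec_mem_posOrth u)).ne', Real.log_exp,
    add_comm, logGauge]

lemma logPullback_comp_eq (hq : IsMeasurableGauge n q) (z : Fin n → ℂ) (h : ℝ → ℝ) :
    logPullback z (fun x => (h (q x) : ℂ)) =
      fun u => expDot z u * (h (Real.exp (logGauge q u)) : ℂ) := by
  simp only [hq.exp_logGauge]
  rfl

lemma dim_pos (hq : IsMeasurableGauge n q) : 0 < n := by
  refine Nat.pos_of_ne_zero fun hn => ?_
  subst hn
  have hmem : (0 : Fin 0 → ℝ) ∈ posOrth 0 := fun i => i.elim0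
  have hdouble := hq.map_smul 2 two_pos 0 hmem
  rw [smul_zero] at hdouble
  linarith [hq.pos 0 hmem]

lemma exists_mul_sum_le (hq : IsMeasurableGauge n q) :
    ∃ δ > 0, ∀ x ∈ posOrth n, δ * ∑ i, x i ≤ q x := by
  obtain ⟨B, hB0, hB⟩ := hq.isBounded_level_one.exists_pos_norm_le
  have hn : (0 : ℝ) < n := Nat.cast_pos.2 hq.dim_pos
  refine ⟨(n * B)⁻¹, by positivity, fun x hx => ?_⟩
  have hqx := hq.pos x hx
  have hnorm : ‖(q x)⁻¹ • x‖ ≤ B := by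
    refine hB _ ⟨fun i => mul_pos (inv_pos.2 hqx) (hx i), ?_⟩
    rw [hq.map_smul _ (inv_pos.2 hqx) x hx, inv_mul_cancel₀ hqx.ne']
  have hcoord (i : Fin n) : x i ≤ q x * B := by
    rw [norm_smul, norm_inv, Real.norm_of_nonneg hqx.le, inv_mul_le_iff₀ hqx] at hnorm
    exact (le_abs_self _).trans ((norm_le_pi_norm x i).trans hnorm)
  rw [inv_mul_le_iff₀ (by positivity)]
  calc ∑ i, x i ≤ ∑ _i : Fin n, q x * B := Finset.sum_le_sum fun i _ => hcoord i
    _ = n * B * q x := by simp; ring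

lemma integrable_logPullback_exp_neg (hq : IsMeasurableGauge n q) (hz : ∀ i, 0 < (z i).re) :
    Integrable (logPullback z fun x => (Real.exp (-q x) : ℂ)) := by
  obtain ⟨δ, hδ, hle⟩ := hq.exists_mul_sum_le
  refine (integrable_logPullback_exp_neg_mul_sum hz hδ).mono ?_ (Eventually.of_forall fun u => ?_)
  · have hmeas := hq.measurable_logGauge
    rw [hq.logPullback_comp_eq z fun t => Real.exp (-t)]
    exact (continuous_expDot z).aestronglyMeasurable.mul
      (Measurable.aestronglyMeasurable (by fun_prop))
  · simp only [logPullback, norm_mul, norm_real, Real.norm_eq_abs, Real.abs_exp]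
    gcongr
    exact hle _ (expVec_mem_posOrth u)

lemma integrable_logPullback_comp (hq : IsMeasurableGauge n q) (hz : ∀ i, 0 < (z i).re)
    (hh : MellinConvergent (fun t => (h t : ℂ)) (∑ i, z i)) :
    Integrable (logPullback z fun x => (h (q x) : ℂ)) := by
  have hexp := hq.integrable_logPullback_exp_neg hz
  rw [hq.logPullback_comp_eq z fun t => Real.exp (-t)] at hexp
  rw [hq.logPullback_comp_eq]
  exact integrable_mul_comp_of_integrable
    (G := fun t => (Real.exp (-Real.exp t) : ℂ)) (H := fun t => (h (Real.exp t) : ℂ))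
    hq.measurable_logGauge hq.logGauge_add_smul_one (expDot_add_smul_one z)
    (fun t => ofReal_ne_zero.2 (Real.exp_pos _).ne') hexp
    (mellinConvergent_iff_integrable_exp.1 hh)

theorem mellinT_comp_mul_Gamma (hq : IsMeasurableGauge n q) (hz : 0 < (∑ i, z i).re) (h : ℝ → ℝ) :
    mellinT n (fun x => h (q x)) z * Gamma (∑ i, z i) =
      mellinT n (fun x => Real.exp (-q x)) z * mellin (fun t => (h t : ℂ)) (∑ i, z i) := by
  rw [mellinT_eq_integral_logPullback, mellinT_eq_integral_logPullback,
    hq.logPullback_comp_eq, hq.logPullback_comp_eq z fun t => Real.exp (-t), ← mellin_exp_neg hz,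
    mellin_eq_integral_exp, mellin_eq_integral_exp]
  exact integral_mul_comp_mul_integral_comm
    (G := fun t => (Real.exp (-Real.exp t) : ℂ)) (H := fun t => (h (Real.exp t) : ℂ))
    hq.measurable_logGauge hq.logGauge_add_smul_one (expDot_add_smul_one z)

lemma mellinT_comp_ne_zero_iff (hq : IsMeasurableGauge n q) (hz : 0 < (∑ i, z i).re) (h : ℝ → ℝ) :
    mellinT n (fun x => h (q x)) z ≠ 0 ↔
      mellinT n (fun x => Real.exp (-q x)) z ≠ 0 ∧
        mellin (fun t => (h t : ℂ)) (∑ i, z i) ≠ 0 := by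
  rw [← mul_ne_zero_iff, ← hq.mellinT_comp_mul_Gamma hz, mul_ne_zero_iff,
    and_iff_left (Gamma_ne_zero_of_re_pos hz)]

end IsMeasurableGauge

lemma sum_ofReal_add_I_mul {ι : Type*} [Fintype ι] (c ξ : ι → ℝ) :
    ∑ i, ((c i : ℂ) + I * ξ i) = (∑ i, c i : ℝ) + I * (∑ i, ξ i : ℝ) := by
  push_cast
  rw [Finset.sum_add_distrib, Finset.mul_sum]

theorem rhq_injective_Linf_iff_general
    (n : ℕ) (q : (Fin n → ℝ) → ℝ) (hq : IsMeasurableGauge n q)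
    (c : Fin n → ℝ) (hc : ∀ i, 0 < c i) (α : ℝ) (hα : α = ∑ i, c i)
    (h : ℝ → ℝ) (hh : MemL1w1 α h) :
    (∀ f : (Fin n → ℝ) → ℝ, MemLinfw n (fun i => 1 - c i) f →
        (∀ p ∈ posOrth n, Rhq n q h f p = 0) →
        ∀ᵐ x ∂(volume.restrict (posOrth n)), f x = 0) ↔
      ((∀ ξ : Fin n → ℝ,
          mellinT n (fun x => Real.exp (-q x)) (fun i => (c i : ℂ) + I * (ξ i : ℂ)) ≠ 0) ∧
        (∀ τ : ℝ, mellin (fun t => (h t : ℂ)) ((α : ℂ) + I * (τ : ℂ)) ≠ 0)) := by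
  have : Nonempty (Fin n) := ⟨⟨0, hq.dim_pos⟩⟩
  have hα0 : 0 < α := hα ▸ Finset.sum_pos (fun i _ => hc i) Finset.univ_nonempty
  have hint : Integrable (logPullback (fun i => c i) fun x => (h (q x) : ℂ)) := by
    refine hq.integrable_logPullback_comp (fun i => hc i) (MemL1w1.mellinConvergent ?_)
    rwa [← ofReal_sum, ← hα, ofReal_re]
  have hsum (ξ : Fin n → ℝ) : ∑ i, ((c i : ℂ) + I * ξ i) = α + I * (∑ i, ξ i : ℝ) :=
    hα ▸ sum_ofReal_add_I_mul c ξ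
  have hfactor (ξ : Fin n → ℝ) :
      mellinT n (fun x => h (q x)) (fun i => c i + I * ξ i) ≠ 0 ↔
        mellinT n (fun x => Real.exp (-q x)) (fun i => c i + I * ξ i) ≠ 0 ∧
          mellin (fun t => (h t : ℂ)) (α + I * (∑ i, ξ i : ℝ)) ≠ 0 :=
    hsum ξ ▸ hq.mellinT_comp_ne_zero_iff (by simpa [hsum] using hα0) h
  have hsurj : Function.Surjective fun ξ : Fin n → ℝ => ∑ i, ξ i := fun τ =>
    ⟨Pi.single ⟨0, hq.dim_pos⟩ τ, by simp⟩
  refine (dilation_kernel_injective_iff hint).trans ?_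
  simp only [hfactor, forall_and]
  exact and_congr_right' (hsurj.forall (p := fun τ : ℝ =>
    mellin (fun t => (h t : ℂ)) (α + I * τ) ≠ 0)).symm

/-- Theorem: `R^h_q` is injective on `L^∞_{I-c}(ℝ^n_+)` iff `(M e^{-q})` has no zeros
on the plane `Re z = c` and `Mh` has no zeros on the line `Re s = α`. -/
theorem rhq_injective_Linf_iff
    (n : ℕ) (hn : 2 ≤ n) (q : (Fin n → ℝ) → ℝ) (hq : IsCostFun n q)
    (c : Fin n → ℝ) (hc : ∀ i, 0 < c i) (α : ℝ) (hα : α = ∑ i, c i)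
    (h : ℝ → ℝ) (hh : MemL1w1 α h) :
    (∀ f : (Fin n → ℝ) → ℝ, MemLinfw n (fun i => 1 - c i) f →
        (∀ p ∈ posOrth n, Rhq n q h f p = 0) →
        ∀ᵐ x ∂(volume.restrict (posOrth n)), f x = 0) ↔
      ((∀ ξ : Fin n → ℝ,
          mellinT n (fun x => Real.exp (-q x)) (fun i => (c i : ℂ) + I * (ξ i : ℂ)) ≠ 0) ∧
        (∀ τ : ℝ, mellin (fun t => (h t : ℂ)) ((α : ℂ) + I * (τ : ℂ)) ≠ 0)) := by
  exact rhq_injective_Linf_iff_general n q hq.isMeasurableGauge c hc α hα h hh
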